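/- Let f : ℝ^n → ℝ be continuously differentiable, μ-strongly convex, and have L-Lipschitz continuous gradient with 0 < μ < L, and let x* be its unique minimizer with f* = f(x*). Let α ∈ (0, 1/L] and β = √((1 - αμ)(1 - αL)). Let {x_k} be generated by the Heavy-ball iteration x_{k+1} = x_k - α∇f(x_k) + β(x_k - x_{k-1}) with x_{-1} = x_0. Then there exists C ≥ 0 such that for all k ∈ ℕ, f(x_k) - f* ≤ C (1 - αμ)^k (f(x_0) - f*). -/

import Mathlib

/-!
The Lyapunov function `V k = f (x k) - f xstar + (1 - α L) / (2 α) * ‖x k - x (k - 1)‖ ^ 2`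
contracts by the factor `1 - α μ` at every step. In the descent inequality (`descent_lemma`) applied
to the step from `x k` to `x (k + 1)`, the weight `(1 - α L) / (2 α)` is exactly the one for which
the cross term `⟪f' (x k), x k - x (k - 1)⟫` cancels, leaving
`-(α / 2) * ‖f' (x k)‖ ^ 2 + β ^ 2 / (2 α) * ‖x k - x (k - 1)‖ ^ 2`.
The gradient term is bounded by the Polyak–Łojasiewicz inequality (`gradient_dominated`), and the
choice of `β` makes the momentum term equal to `(1 - α μ)` times the old one. Since
`x (-1) = x 0`, one has `V 0 = f (x 0) - f xstar`, so `C = 1` works.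
-/

open scoped RealInnerProductSpace

section HeavyBall

variable {E : Type*} [NormedAddCommGroup E] [InnerProductSpace ℝ E]

/-- Quadratic upper bound for a function with `L`-Lipschitz gradient: along the segment from `z` to
`z + d`, the difference between `f` and the quadratic model is antitone. -/
theorem descent_lemma [CompleteSpace E] {f : E → ℝ} {f' : E → E} {L : ℝ}
    (hgrad : ∀ z, HasGradientAt f (f' z) z)
    (hlip : ∀ z w, ‖f' z - f' w‖ ≤ L * ‖z - w‖) (z d : E) :
    f (z + d) ≤ f z + ⟪f' z, d⟫ + L / 2 * ‖d‖ ^ 2 := by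
  have hder : ∀ t : ℝ, HasDerivAt
      (fun t : ℝ => f (z + t • d) - (t * ⟪f' z, d⟫ + t ^ 2 * (L / 2 * ‖d‖ ^ 2)))
      (⟪f' (z + t • d), d⟫ - (⟪f' z, d⟫ + 2 * t * (L / 2 * ‖d‖ ^ 2))) t := by
    intro t
    have hline : HasDerivAt (fun t : ℝ => z + t • d) d t := by
      simpa using ((hasDerivAt_id t).smul_const d).const_add z
    have hf : HasDerivAt (fun t : ℝ => f (z + t • d)) ⟪f' (z + t • d), d⟫ t := by
      simpa [Function.comp_def] using (hgrad (z + t • d)).hasFDerivAt.comp_hasDerivAt t hline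
    have hq : HasDerivAt (fun t : ℝ => t * ⟪f' z, d⟫ + t ^ 2 * (L / 2 * ‖d‖ ^ 2))
        (⟪f' z, d⟫ + 2 * t * (L / 2 * ‖d‖ ^ 2)) t := by
      simpa [Pi.add_def] using ((hasDerivAt_id t).mul_const ⟪f' z, d⟫).add
        ((hasDerivAt_pow 2 t).mul_const (L / 2 * ‖d‖ ^ 2))
    exact hf.sub hq
  have hanti : AntitoneOn
      (fun t : ℝ => f (z + t • d) - (t * ⟪f' z, d⟫ + t ^ 2 * (L / 2 * ‖d‖ ^ 2)))
      (Set.Icc 0 1) := by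
    refine antitoneOn_of_deriv_nonpos (convex_Icc 0 1)
      (fun t _ => (hder t).continuousAt.continuousWithinAt)
      (fun t _ => (hder t).differentiableAt.differentiableWithinAt) fun t ht => ?_
    rw [interior_Icc] at ht
    rw [(hder t).deriv]
    have hcs : ⟪f' (z + t • d) - f' z, d⟫ ≤ L * (t * ‖d‖) * ‖d‖ := by
      refine (real_inner_le_norm _ _).trans (mul_le_mul_of_nonneg_right ?_ (norm_nonneg d))
      simpa [norm_smul, abs_of_pos ht.1] using hlip (z + t • d) z
    rw [inner_sub_left] at hcs
    linarith
  have h01 := hanti (Set.left_mem_Icc.2 zero_le_one) (Set.right_mem_Icc.2 zero_le_one) zero_le_one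
  norm_num at h01
  linarith

/-- Polyak–Łojasiewicz inequality: completing the square in the strong convexity inequality between
`z` and any other point `w`. -/
theorem gradient_dominated {f : E → ℝ} {f' : E → E} {μ : ℝ} (hμ : 0 < μ)
    (hstrong : ∀ z w, μ / 2 * ‖z - w‖ ^ 2 ≤ f w - f z - ⟪f' z, w - z⟫) (z w : E) :
    2 * μ * (f z - f w) ≤ ‖f' z‖ ^ 2 := by
  have hs := hstrong z w
  rw [norm_sub_rev] at hs
  have hsq := norm_add_sq_real (f' z) (μ • (w - z))
  rw [norm_smul, inner_smul_right, Real.norm_of_nonneg hμ.le] at hsq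
  nlinarith [mul_le_mul_of_nonneg_left hs hμ.le, sq_nonneg ‖f' z + μ • (w - z)‖]

/-- One Heavy-ball step contracts the Lyapunov function by `1 - α * μ`. -/
theorem lyapunov_step [CompleteSpace E] {f : E → ℝ} {f' : E → E} {μ L α β : ℝ}
    (hμ : 0 < μ) (hgrad : ∀ z, HasGradientAt f (f' z) z)
    (hstrong : ∀ z w, μ / 2 * ‖z - w‖ ^ 2 ≤ f w - f z - ⟪f' z, w - z⟫)
    (hlip : ∀ z w, ‖f' z - f' w‖ ≤ L * ‖z - w‖) (hα : 0 < α)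
    (hβ : β ^ 2 = (1 - α * μ) * (1 - α * L)) (xstar z p : E) :
    f (z + (β • p - α • f' z)) - f xstar + (1 - α * L) / (2 * α) * ‖β • p - α • f' z‖ ^ 2 ≤
      (1 - α * μ) * (f z - f xstar + (1 - α * L) / (2 * α) * ‖p‖ ^ 2) := by
  have hdesc := descent_lemma hgrad hlip z (β • p - α • f' z)
  have hPL := mul_le_mul_of_nonneg_left (gradient_dominated hμ hstrong z xstar) hα.le
  have hinner : ⟪f' z, β • p - α • f' z⟫ = β * ⟪f' z, p⟫ - α * ‖f' z‖ ^ 2 := by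
    rw [inner_sub_right, inner_smul_right, inner_smul_right, real_inner_self_eq_norm_sq]
  have hnorm : ‖β • p - α • f' z‖ ^ 2 =
      β ^ 2 * ‖p‖ ^ 2 - 2 * α * β * ⟪f' z, p⟫ + α ^ 2 * ‖f' z‖ ^ 2 := by
    rw [norm_sub_sq_real, norm_smul, norm_smul, inner_smul_left, inner_smul_right, mul_pow,
      mul_pow, Real.norm_eq_abs, Real.norm_eq_abs, sq_abs, sq_abs, real_inner_comm]
    simp only [conj_trivial]
    ring
  -- The total weight of the squared step is `L / 2 + (1 - α L) / (2 α) = 1 / (2 α)`.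
  have hweight : (L / 2 + (1 - α * L) / (2 * α)) * ‖β • p - α • f' z‖ ^ 2 =
      (1 - α * μ) * ((1 - α * L) / (2 * α) * ‖p‖ ^ 2) - β * ⟪f' z, p⟫ + α / 2 * ‖f' z‖ ^ 2 := by
    rw [hnorm, hβ]
    field_simp
    ring
  rw [hinner] at hdesc
  linarith

end HeavyBall

/-- Explicit convergence factor q = 1 - αμ for the Heavy-ball method with
α ∈ (0,1/L] and β = √((1-αμ)(1-αL)) on strongly convex objectives. -/
theorem heavy_ball_strongly_convex_explicit_factor
    {n : ℕ} (f : EuclideanSpace ℝ (Fin n) → ℝ)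
    (f' : EuclideanSpace ℝ (Fin n) → EuclideanSpace ℝ (Fin n))
    (μ L : ℝ) (hμ : 0 < μ) (hμL : μ < L)
    (hC1 : ContDiff ℝ 1 f)
    (hgrad : ∀ z, HasGradientAt f (f' z) z)
    (hstrong : ∀ z w, μ / 2 * ‖z - w‖ ^ 2 ≤ f w - f z - ⟪f' z, w - z⟫)
    (hlip : ∀ z w, ‖f' z - f' w‖ ≤ L * ‖z - w‖)
    (xstar : EuclideanSpace ℝ (Fin n)) (hmin : ∀ z, f xstar ≤ f z)
    (α β : ℝ) (hα0 : 0 < α) (hα1 : α ≤ 1 / L)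
    (hβ : β = Real.sqrt ((1 - α * μ) * (1 - α * L)))
    (x : ℤ → EuclideanSpace ℝ (Fin n))
    (hinit : x (-1) = x 0)
    (hiter : ∀ k : ℤ, 0 ≤ k →
      x (k + 1) = x k - α • f' (x k) + β • (x k - x (k - 1))) :
    ∃ C : ℝ, 0 ≤ C ∧ ∀ k : ℕ,
      f (x (k : ℤ)) - f xstar ≤ C * (1 - α * μ) ^ k * (f (x 0) - f xstar) := by
  have hL : 0 < L := hμ.trans hμL
  have hαL : 0 ≤ 1 - α * L := by
    rw [le_div_iff₀ hL] at hα1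
    linarith
  have hαμ : 0 ≤ 1 - α * μ := by nlinarith
  have hβ2 : β ^ 2 = (1 - α * μ) * (1 - α * L) := by
    rw [hβ, Real.sq_sqrt (mul_nonneg hαμ hαL)]
  have hV : ∀ k : ℕ, f (x k) - f xstar + (1 - α * L) / (2 * α) * ‖x k - x (k - 1)‖ ^ 2 ≤
      (1 - α * μ) ^ k * (f (x 0) - f xstar) := by
    intro k
    induction k with
    | zero => simp [hinit]
    | succ k ih =>
      have hstep : x ((k + 1 : ℕ) : ℤ) = x k + (β • (x k - x (k - 1)) - α • f' (x k)) := by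
        push_cast
        rw [hiter k (Int.natCast_nonneg k)]
        abel
      have hprev : ((k + 1 : ℕ) : ℤ) - 1 = k := by simp
      rw [hprev, hstep, add_sub_cancel_left, pow_succ' (1 - α * μ), mul_assoc (1 - α * μ)]
      exact (lyapunov_step hμ hgrad hstrong hlip hα0 hβ2 xstar (x k) (x k - x (k - 1))).trans
        (mul_le_mul_of_nonneg_left ih hαμ)
  refine ⟨1, zero_le_one, fun k => ?_⟩
  have hmomentum : 0 ≤ (1 - α * L) / (2 * α) * ‖x k - x (k - 1)‖ ^ 2 := by positivity
  linarith [hV k]
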